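/- Let L ~ Po(λ) and define the signed log-likelihood G(k) = sign(k-λ)·sqrt(2(k·ln(k/λ) - k + λ)) for k ∈ ℕ (with the convention 0·ln 0 = 0). Then P(L < k) ≤ Φ(G(k)) ≤ P(L ≤ k) for every natural number k. -/

import Mathlib

noncomputable def poissonSLL (lam : ℝ) (k : ℕ) : ℝ :=
  if (k : ℝ) < lam then
    -Real.sqrt (2 * ((k : ℝ) * Real.log ((k : ℝ) / lam) - (k : ℝ) + lam))
  else
    Real.sqrt (2 * ((k : ℝ) * Real.log ((k : ℝ) / lam) - (k : ℝ) + lam))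

noncomputable def stdGaussianCDF (t : ℝ) : ℝ :=
  ∫ x in Set.Iic t, Real.exp (-x ^ 2 / 2) / Real.sqrt (2 * Real.pi)

/-!
For fixed `k ≥ 1`, both sides of each inequality are functions of the Poisson mean `x` which tend to
`1` as `x → 0` and to `0` as `x → ∞`. If the ratio of the derivatives of two such functions is
monotone, then their difference, with the right sign, first increases and then decreases, hence is
nonnegative: a monotone likelihood ratio gives stochastic dominance.

Let `D x = D(Po(k)‖Po(x))`. The probabilities `P(Po(x) < k)` and `P(Po(x) ≤ k)` have derivative
`-(x ^ j * exp (-x) / j!)`, where `j = k - 1` and `j = k` respectively, whereas the derivative of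
`Φ(G)` is a negative constant times `x ^ k * exp (-x) * |1 - k / x| / √(2 * D x)`. So the claims are
that `(x - k) ^ 2 / D x` increases and `(1 - k / x) ^ 2 / D x` decreases in `x`. Numerators and
denominator vanish at `x = k`, and the quotients of their derivatives are `2 * x` and
`2 * k / x ^ 2`, so both claims are instances of the monotone form of l'Hôpital's rule.

For `k = 0` the lower bound is trivial and the upper bound is the Chernoff bound for `Φ`.
-/

open Filter Set Topology MeasureTheory ProbabilityTheory

section Calculus

variable {f f' g g' p q w : ℝ → ℝ} {s : Set ℝ} {a b c k : ℝ}

lemma monotoneOn_of_hasDerivAt_nonneg_of_ne (hs : Convex ℝ s) (hf : ContinuousOn f s)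
    (hf' : ∀ x ∈ interior s, x ≠ k → HasDerivAt f (f' x) x)
    (hf'_nonneg : ∀ x ∈ interior s, x ≠ k → 0 ≤ f' x) : MonotoneOn f s := by
  have monotoneOn_inter {t : Set ℝ} (ht : Convex ℝ t) (hkt : k ∉ interior t) :
      MonotoneOn f (s ∩ t) := by
    have hne : ∀ x ∈ interior (s ∩ t), x ∈ interior s ∧ x ≠ k := fun x hx ↦
      ⟨interior_mono inter_subset_left hx,
        fun h ↦ hkt (h ▸ interior_mono inter_subset_right hx)⟩
    exact monotoneOn_of_hasDerivWithinAt_nonneg (hs.inter ht) (hf.mono inter_subset_left)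
      (fun x hx ↦ (hf' x (hne x hx).1 (hne x hx).2).hasDerivWithinAt)
      (fun x hx ↦ hf'_nonneg x (hne x hx).1 (hne x hx).2)
  have hleft : MonotoneOn f (s ∩ Iic k) := monotoneOn_inter (convex_Iic k) (by simp)
  have hright : MonotoneOn f (s ∩ Ici k) := monotoneOn_inter (convex_Ici k) (by simp)
  intro x hx y hy hxy
  rcases le_total y k with hyk | hky
  · exact hleft ⟨hx, hxy.trans hyk⟩ ⟨hy, hyk⟩ hxy
  rcases le_total k x with hkx | hxk
  · exact hright ⟨hx, hkx⟩ ⟨hy, hky⟩ hxy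
  have hk : k ∈ s := hs.ordConnected.out hx hy ⟨hxk, hky⟩
  exact (hleft ⟨hx, hxk⟩ ⟨hk, self_mem_Iic⟩ hxk).trans (hright ⟨hk, self_mem_Ici⟩ ⟨hy, hky⟩ hky)

lemma nonneg_of_hasDerivAt_mul_sub_of_monotoneOn (hf : ContinuousOn f (Ioi a))
    (hf' : ∀ x ∈ Ioi a \ {k}, HasDerivAt f (w x * (c - q x)) x)
    (hw : ∀ x ∈ Ioi a, 0 ≤ w x) (hq : MonotoneOn q (Ioi a \ {k}))
    (hleft : Tendsto f (𝓝[>] a) (𝓝 0)) (hright : Tendsto f atTop (𝓝 0)) :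
    ∀ x ∈ Ioi a, 0 ≤ f x := by
  intro x hx
  by_cases hcross : ∃ y ∈ Ioi a \ {k}, x ≤ y ∧ q y ≤ c
  · obtain ⟨y, hy, hxy, hqy⟩ := hcross
    have hmono : MonotoneOn f (Ioc a x) := by
      refine monotoneOn_of_hasDerivAt_nonneg_of_ne (convex_Ioc a x) (hf.mono fun z hz ↦ hz.1)
        (fun z hz hzk ↦ hf' z ⟨(interior_subset hz).1, hzk⟩) fun z hz hzk ↦ ?_
      obtain ⟨haz, hzx⟩ := interior_subset hz
      exact mul_nonneg (hw z haz)
        (sub_nonneg.2 ((hq ⟨haz, hzk⟩ hy (hzx.trans hxy)).trans hqy))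
    refine le_of_tendsto hleft ?_
    filter_upwards [Ioo_mem_nhdsGT hx] with z hz
    exact hmono ⟨hz.1, hz.2.le⟩ ⟨hx, le_rfl⟩ hz.2.le
  · push Not at hcross
    have hanti : MonotoneOn (-f) (Ici x) := by
      have hxa : Ici x ⊆ Ioi a := Ici_subset_Ioi.2 hx
      refine monotoneOn_of_hasDerivAt_nonneg_of_ne (convex_Ici x) (hf.mono hxa).neg
        (fun z hz hzk ↦ (hf' z ⟨hxa (interior_subset hz), hzk⟩).neg) fun z hz hzk ↦ ?_
      have hza := hxa (interior_subset hz)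
      rw [← mul_neg, neg_sub]
      exact mul_nonneg (hw z hza)
        (sub_nonneg.2 (hcross z ⟨hza, hzk⟩ (interior_subset hz)).le)
    refine le_of_tendsto hright ?_
    filter_upwards [eventually_ge_atTop x] with z hz
    exact neg_le_neg_iff.1 (hanti self_mem_Ici hz hz)

lemma strictMonoOn_inter_Ici_of_hasDerivAt_pos (hs : Convex ℝ s)
    (hg : ∀ x ∈ s, HasDerivAt g (g' x) x) (hg' : ∀ x ∈ s, c < x → 0 < g' x) :
    StrictMonoOn g (s ∩ Ici c) :=
  strictMonoOn_of_hasDerivWithinAt_pos (hs.inter (convex_Ici c))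
    (fun x hx ↦ (hg x hx.1).continuousAt.continuousWithinAt)
    (fun x hx ↦ (hg x (interior_subset hx).1).hasDerivWithinAt) fun x hx ↦
    hg' x (interior_subset hx).1 (by simpa using interior_mono inter_subset_right hx)

lemma strictAntiOn_inter_Iic_of_hasDerivAt_neg (hs : Convex ℝ s)
    (hg : ∀ x ∈ s, HasDerivAt g (g' x) x) (hg' : ∀ x ∈ s, x < c → g' x < 0) :
    StrictAntiOn g (s ∩ Iic c) :=
  strictAntiOn_of_hasDerivWithinAt_neg (hs.inter (convex_Iic c))
    (fun x hx ↦ (hg x hx.1).continuousAt.continuousWithinAt)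
    (fun x hx ↦ (hg x (interior_subset hx).1).hasDerivWithinAt) fun x hx ↦
    hg' x (interior_subset hx).1 (by simpa using interior_mono inter_subset_right hx)

lemma pos_of_hasDerivAt_neg_of_hasDerivAt_pos (hs : Convex ℝ s) (hc : c ∈ s)
    (hg : ∀ x ∈ s, HasDerivAt g (g' x) x) (hg'_neg : ∀ x ∈ s, x < c → g' x < 0)
    (hg'_pos : ∀ x ∈ s, c < x → 0 < g' x) (hgc : g c = 0) : ∀ x ∈ s \ {c}, 0 < g x := by
  rintro x ⟨hx, hxc⟩
  rw [← hgc]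
  rcases lt_or_gt_of_ne hxc with h | h
  · exact strictAntiOn_inter_Iic_of_hasDerivAt_neg hs hg hg'_neg ⟨hx, h.le⟩ ⟨hc, self_mem_Iic⟩ h
  · exact strictMonoOn_inter_Ici_of_hasDerivAt_pos hs hg hg'_pos ⟨hc, self_mem_Ici⟩ ⟨hx, h.le⟩ h

lemma exists_mem_Ioo_sub_eq_mul_sub (hs : Convex ℝ s)
    (hg : ∀ x ∈ s, HasDerivAt g (g' x) x) (hf : ∀ x ∈ s, HasDerivAt f (p x * g' x) x)
    (hg' : ∀ x ∈ s, x ≠ c → g' x ≠ 0) (ha : a ∈ s) (hb : b ∈ s) (hab : a < b)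
    (hside : b ≤ c ∨ c ≤ a) : ∃ x ∈ s, x ∈ Ioo a b ∧ f b - f a = p x * (g b - g a) := by
  have hsub : Icc a b ⊆ s := hs.ordConnected.out ha hb
  obtain ⟨x, hx, hratio⟩ := exists_ratio_hasDerivAt_eq_ratio_slope f (fun x ↦ p x * g' x) hab
    (fun x hx ↦ (hf x (hsub hx)).continuousAt.continuousWithinAt)
    (fun x hx ↦ hf x (hsub (Ioo_subset_Icc_self hx))) g g'
    (fun x hx ↦ (hg x (hsub hx)).continuousAt.continuousWithinAt)
    (fun x hx ↦ hg x (hsub (Ioo_subset_Icc_self hx)))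
  have hxs : x ∈ s := hsub (Ioo_subset_Icc_self hx)
  have hxc : x ≠ c :=
    hside.elim (fun h ↦ (hx.2.trans_le h).ne) fun h ↦ (h.trans_lt hx.1).ne'
  exact ⟨x, hxs, hx, mul_right_cancel₀ (hg' x hxs hxc) (by linear_combination -hratio)⟩

lemma exists_le_mul_and_mul_le_of_hasDerivAt_mul (hs : Convex ℝ s) (hc : c ∈ s)
    (hg : ∀ x ∈ s, HasDerivAt g (g' x) x) (hf : ∀ x ∈ s, HasDerivAt f (p x * g' x) x)
    (hg'_neg : ∀ x ∈ s, x < c → g' x < 0) (hg'_pos : ∀ x ∈ s, c < x → 0 < g' x)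
    (hgc : g c = 0) (hfc : f c = 0) (hp : MonotoneOn p s) {x y : ℝ} (hx : x ∈ s \ {c})
    (hy : y ∈ s \ {c}) (hxy : x < y) : ∃ m, f x ≤ m * g x ∧ m * g y ≤ f y := by
  have hpos := pos_of_hasDerivAt_neg_of_hasDerivAt_pos hs hc hg hg'_neg hg'_pos hgc
  have hg' : ∀ z ∈ s, z ≠ c → g' z ≠ 0 := fun z hz hzc ↦
    hzc.lt_or_gt.elim (fun h ↦ (hg'_neg z hz h).ne) fun h ↦ (hg'_pos z hz h).ne'
  -- `m` is `p` at a mean-value point between `c` and whichever of `x`, `y` is nearer to `c`,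
  -- or `p c` if `c` separates them.
  have cauchy {a b : ℝ} := exists_mem_Ioo_sub_eq_mul_sub (a := a) (b := b) hs hg hf hg'
  rcases lt_or_gt_of_ne hx.2 with hxc | hcx <;> rcases lt_or_gt_of_ne hy.2 with hyc | hcy
  · obtain ⟨u, hu, ⟨-, huy⟩, hfu⟩ := cauchy hx.1 hy.1 hxy (.inl hyc.le)
    obtain ⟨v, hv, ⟨hyv, -⟩, hfv⟩ := cauchy hy.1 hc hyc (.inl le_rfl)
    rw [hfc, hgc] at hfv
    have hgxy : g y < g x := strictAntiOn_inter_Iic_of_hasDerivAt_neg hs hg hg'_neg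
      ⟨hx.1, hxc.le⟩ ⟨hy.1, hyc.le⟩ hxy
    have hpuv : p u * (g x - g y) ≤ p v * (g x - g y) :=
      mul_le_mul_of_nonneg_right (hp hu hv (huy.trans hyv).le) (sub_nonneg.2 hgxy.le)
    exact ⟨p v, by linarith, by linarith⟩
  · obtain ⟨u, hu, ⟨-, huc⟩, hfu⟩ := cauchy hx.1 hc hxc (.inl le_rfl)
    obtain ⟨v, hv, ⟨hcv, -⟩, hfv⟩ := cauchy hc hy.1 hcy (.inr le_rfl)
    have hpu := mul_le_mul_of_nonneg_right (hp hu hc huc.le) (hpos x hx).le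
    have hpv := mul_le_mul_of_nonneg_right (hp hc hv hcv.le) (hpos y hy).le
    rw [hfc, hgc] at hfu hfv
    exact ⟨p c, by linarith, by linarith⟩
  · exact absurd (hcx.trans hxy) hyc.not_gt
  · obtain ⟨u, hu, ⟨-, hux⟩, hfu⟩ := cauchy hc hx.1 hcx (.inr le_rfl)
    obtain ⟨v, hv, ⟨hxv, -⟩, hfv⟩ := cauchy hx.1 hy.1 hxy (.inr hcx.le)
    have hgxy : g x < g y := strictMonoOn_inter_Ici_of_hasDerivAt_pos hs hg hg'_pos
      ⟨hx.1, hcx.le⟩ ⟨hy.1, hcy.le⟩ hxy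
    have hpuv : p u * (g y - g x) ≤ p v * (g y - g x) :=
      mul_le_mul_of_nonneg_right (hp hu hv (hux.trans hxv).le) (sub_nonneg.2 hgxy.le)
    rw [hfc, hgc] at hfu
    exact ⟨p u, by linarith, by linarith⟩

lemma monotoneOn_div_of_hasDerivAt_mul (hs : Convex ℝ s) (hc : c ∈ s)
    (hg : ∀ x ∈ s, HasDerivAt g (g' x) x) (hf : ∀ x ∈ s, HasDerivAt f (p x * g' x) x)
    (hg'_neg : ∀ x ∈ s, x < c → g' x < 0) (hg'_pos : ∀ x ∈ s, c < x → 0 < g' x)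
    (hgc : g c = 0) (hfc : f c = 0) (hp : MonotoneOn p s) :
    MonotoneOn (fun x ↦ f x / g x) (s \ {c}) := by
  have hpos := pos_of_hasDerivAt_neg_of_hasDerivAt_pos hs hc hg hg'_neg hg'_pos hgc
  intro x hx y hy hxy
  rcases hxy.eq_or_lt with rfl | hxy
  · exact le_rfl
  obtain ⟨m, hmx, hmy⟩ := exists_le_mul_and_mul_le_of_hasDerivAt_mul hs hc hg hf hg'_neg hg'_pos
    hgc hfc hp hx hy hxy
  calc f x / g x ≤ m := (div_le_iff₀ (hpos x hx)).2 hmx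
    _ ≤ f y / g y := (le_div_iff₀ (hpos y hy)).2 hmy

end Calculus

section Gaussian

lemma hasDerivAt_integral_Iic {E : Type*} [NormedAddCommGroup E] [NormedSpace ℝ E]
    [CompleteSpace E] {f : ℝ → E} (hf : Continuous f) (hint : Integrable f) (t : ℝ) :
    HasDerivAt (fun u ↦ ∫ x in Iic u, f x) (f t) t := by
  have hderiv : HasDerivAt (fun u ↦ (∫ x in Iic 0, f x) + ∫ x in 0..u, f x) (f t) t :=
    (hf.integral_hasStrictDerivAt 0 t).hasDerivAt.const_add _
  refine hderiv.congr_of_eventuallyEq (.of_forall fun u ↦ ?_)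
  exact (add_eq_of_eq_sub'
    (intervalIntegral.integral_Iic_sub_Iic hint.integrableOn hint.integrableOn).symm).symm

lemma gaussianPDFReal_zero_one (x : ℝ) :
    gaussianPDFReal 0 1 x = Real.exp (-x ^ 2 / 2) / √(2 * Real.pi) := by
  simp [gaussianPDFReal, div_eq_inv_mul]

lemma stdGaussianCDF_eq_integral_gaussianPDFReal :
    stdGaussianCDF = fun t ↦ ∫ x in Iic t, gaussianPDFReal 0 1 x := by
  simp only [gaussianPDFReal_zero_one]
  rfl

lemma stdGaussianCDF_eq_cdf : stdGaussianCDF = cdf (gaussianReal 0 1) := by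
  ext t
  rw [cdf_eq_real, measureReal_def, gaussianReal_apply_eq_integral 0 one_ne_zero,
    ENNReal.toReal_ofReal (integral_nonneg (gaussianPDFReal_nonneg 0 1)),
    stdGaussianCDF_eq_integral_gaussianPDFReal]

lemma stdGaussianCDF_nonneg (t : ℝ) : 0 ≤ stdGaussianCDF t :=
  stdGaussianCDF_eq_cdf ▸ cdf_nonneg _ t

lemma tendsto_stdGaussianCDF_atBot : Tendsto stdGaussianCDF atBot (𝓝 0) :=
  stdGaussianCDF_eq_cdf ▸ tendsto_cdf_atBot _

lemma tendsto_stdGaussianCDF_atTop : Tendsto stdGaussianCDF atTop (𝓝 1) :=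
  stdGaussianCDF_eq_cdf ▸ tendsto_cdf_atTop _

lemma hasDerivAt_stdGaussianCDF (t : ℝ) :
    HasDerivAt stdGaussianCDF (Real.exp (-t ^ 2 / 2) / √(2 * Real.pi)) t := by
  rw [stdGaussianCDF_eq_integral_gaussianPDFReal, ← gaussianPDFReal_zero_one]
  have hcont : Continuous (gaussianPDFReal 0 1) := by
    rw [gaussianPDFReal_def]
    fun_prop
  exact hasDerivAt_integral_Iic hcont (integrable_gaussianPDFReal 0 1) t

lemma stdGaussianCDF_le_exp_neg_sq_div_two {t : ℝ} (ht : t ≤ 0) :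
    stdGaussianCDF t ≤ Real.exp (-t ^ 2 / 2) := by
  have hchernoff := measure_le_le_exp_mul_mgf (μ := gaussianReal 0 1) (X := id) t ht
    (integrable_exp_mul_gaussianReal t)
  rw [mgf_id_gaussianReal, ← Real.exp_add] at hchernoff
  rw [stdGaussianCDF_eq_cdf, cdf_eq_real]
  refine hchernoff.trans_eq (congrArg Real.exp ?_)
  simp only [NNReal.coe_one]
  ring

end Gaussian

section PoissonSum

/-- The probability `P(L < n)` for `L ~ Po(x)`, as a function of the mean `x`. -/
noncomputable def poissonProbLT (n : ℕ) (x : ℝ) : ℝ :=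
  ∑ m ∈ Finset.range n, x ^ m * Real.exp (-x) / m.factorial

lemma continuous_poissonProbLT (n : ℕ) : Continuous (poissonProbLT n) := by
  unfold poissonProbLT
  fun_prop

lemma hasDerivAt_poissonProbLT_succ (n : ℕ) (x : ℝ) :
    HasDerivAt (poissonProbLT (n + 1)) (-(x ^ n * Real.exp (-x) / n.factorial)) x := by
  have hexp : HasDerivAt (fun x ↦ Real.exp (-x)) (-Real.exp (-x)) x := by
    simpa using (hasDerivAt_neg x).exp
  induction n with
  | zero =>
    have hone : poissonProbLT (0 + 1) = fun x ↦ Real.exp (-x) := by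
      ext
      simp [poissonProbLT]
    simpa [hone] using hexp
  | succ n ih =>
    have hsucc : poissonProbLT (n + 1 + 1) =
        fun x ↦ poissonProbLT (n + 1) x + x ^ (n + 1) * Real.exp (-x) / (n + 1).factorial :=
      funext fun _ ↦ Finset.sum_range_succ _ _
    have hterm := ((hasDerivAt_pow (n + 1) x).mul hexp).div_const ((n + 1).factorial : ℝ)
    rw [hsucc]
    refine (ih.add hterm).congr_deriv ?_
    rw [Nat.factorial_succ]
    push_cast
    field_simp
    simp

lemma tendsto_poissonProbLT_succ_nhdsGT_zero (n : ℕ) :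
    Tendsto (poissonProbLT (n + 1)) (𝓝[>] 0) (𝓝 1) := by
  have hzero : poissonProbLT (n + 1) 0 = 1 := by simp [poissonProbLT, Finset.sum_range_succ']
  exact hzero ▸ (continuous_poissonProbLT (n + 1)).continuousWithinAt

lemma tendsto_poissonProbLT_atTop (n : ℕ) : Tendsto (poissonProbLT n) atTop (𝓝 0) := by
  have hterm (m : ℕ) :
      Tendsto (fun x : ℝ ↦ x ^ m * Real.exp (-x) / m.factorial) atTop (𝓝 0) := by
    simpa using (Real.tendsto_pow_mul_exp_neg_atTop_nhds_zero m).div_const (m.factorial : ℝ)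
  unfold poissonProbLT
  simpa using tendsto_finsetSum (Finset.range n) fun m _ ↦ hterm m

end PoissonSum

section PoissonDivergence

/-- The divergence `D(Po(k)‖Po(x))` between Poisson distributions with (real) means `k` and `x`. -/
noncomputable def poissonDivergence (k x : ℝ) : ℝ := k * Real.log (k / x) - k + x

variable {k x : ℝ}

@[simp]
lemma poissonDivergence_self (k : ℝ) : poissonDivergence k k = 0 := by
  rcases eq_or_ne k 0 with rfl | hk <;> simp [poissonDivergence, *]

lemma hasDerivAt_const_div (k : ℝ) (hx : x ≠ 0) :
    HasDerivAt (fun y ↦ k / y) (-(k / x ^ 2)) x := by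
  simpa [neg_div] using (hasDerivAt_const x k).fun_div (hasDerivAt_id x) hx

lemma hasDerivAt_poissonDivergence (hk : k ≠ 0) (hx : x ≠ 0) :
    HasDerivAt (poissonDivergence k) (1 - k / x) x := by
  refine (((((hasDerivAt_const_div k hx).log (div_ne_zero hk hx)).const_mul k).sub_const k).add
    (hasDerivAt_id x)).congr_deriv ?_
  field_simp
  ring

lemma one_sub_div_neg (hx : 0 < x) (hxk : x < k) : 1 - k / x < 0 :=
  sub_neg.2 ((one_lt_div hx).2 hxk)

lemma one_sub_div_pos (hx : 0 < x) (hkx : k < x) : 0 < 1 - k / x :=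
  sub_pos.2 ((div_lt_one hx).2 hkx)

lemma poissonDivergence_pos (hk : 0 < k) (hx : 0 < x) (hxk : x ≠ k) : 0 < poissonDivergence k x :=
  pos_of_hasDerivAt_neg_of_hasDerivAt_pos (convex_Ioi 0) hk
    (fun _ hy ↦ hasDerivAt_poissonDivergence hk.ne' (ne_of_gt hy))
    (fun _ ↦ one_sub_div_neg) (fun _ ↦ one_sub_div_pos)
    (poissonDivergence_self k) x ⟨hx, hxk⟩

lemma poissonDivergence_nonneg (hk : 0 < k) (hx : 0 < x) : 0 ≤ poissonDivergence k x := by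
  rcases eq_or_ne x k with rfl | hxk
  · simp
  · exact (poissonDivergence_pos hk hx hxk).le

lemma tendsto_poissonDivergence_nhdsGT_zero (hk : 0 < k) :
    Tendsto (poissonDivergence k) (𝓝[>] 0) atTop := by
  have hquot : Tendsto (fun x ↦ k / x) (𝓝[>] 0) atTop := by
    simpa [div_eq_mul_inv] using tendsto_inv_nhdsGT_zero.const_mul_atTop hk
  have hlog : Tendsto (fun x ↦ k * Real.log (k / x) - k) (𝓝[>] 0) atTop :=
    tendsto_atTop_add_const_right _ _ ((Real.tendsto_log_atTop.comp hquot).const_mul_atTop hk)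
  refine tendsto_atTop_mono' _ ?_ hlog
  filter_upwards [self_mem_nhdsWithin] with x hx using le_add_of_nonneg_right (le_of_lt hx)

lemma tendsto_poissonDivergence_atTop (k : ℝ) : Tendsto (poissonDivergence k) atTop atTop := by
  have hquot : Tendsto (fun x ↦ k / x) atTop (𝓝 0) := tendsto_const_nhds.div_atTop tendsto_id
  have hkl : Tendsto (fun x ↦ InformationTheory.klFun (k / x)) atTop (𝓝 1) :=
    InformationTheory.klFun_zero ▸
      (InformationTheory.continuous_klFun.tendsto 0).comp hquot
  refine (tendsto_id.atTop_mul_pos one_pos hkl).congr' ?_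
  filter_upwards [eventually_gt_atTop 0] with x hx
  simp only [poissonDivergence, InformationTheory.klFun_apply, id]
  field_simp
  ring

lemma exp_neg_poissonDivergence {k : ℕ} (hk : k ≠ 0) {x : ℝ} (hx : 0 < x) :
    Real.exp (-poissonDivergence k x) = (Real.exp 1 / k) ^ k * (x ^ k * Real.exp (-x)) := by
  have hexponent : -poissonDivergence k x = k * Real.log (x / k) + k * 1 + -x := by
    rw [poissonDivergence, ← inv_div x, Real.log_inv]
    ring
  rw [hexponent, Real.exp_add, Real.exp_add, Real.exp_nat_mul, Real.exp_log (by positivity),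
    Real.exp_nat_mul]
  ring

/-- Minus the derivative in `x` of the signed log-likelihood (`poissonSLL x k` for natural `k`),
which governs the density of `Φ(G)`. At `x = k` its value is `0 / 0 = 0` instead of the limit
`1 / √k`. -/
noncomputable def poissonSLLSlope (k x : ℝ) : ℝ := |1 - k / x| / √(2 * poissonDivergence k x)

lemma antitoneOn_poissonSLLSlope (hk : 0 < k) :
    AntitoneOn (poissonSLLSlope k) (Ioi 0 \ {k}) := by
  have hnum : ∀ x ∈ Ioi 0,
      HasDerivAt (fun x ↦ -((1 - k / x) ^ 2 / 2)) (-(k / x ^ 2) * (1 - k / x)) x := by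
    intro x hx
    refine ((((hasDerivAt_const_div k (ne_of_gt hx)).const_sub 1).fun_pow 2).div_const
      2).fun_neg.congr_deriv ?_
    ring
  have hp : MonotoneOn (fun x : ℝ ↦ -(k / x ^ 2)) (Ioi 0) := by
    intro x (hx : 0 < x) y _ hxy
    dsimp only
    gcongr
  have hratio := monotoneOn_div_of_hasDerivAt_mul (convex_Ioi 0) hk
    (fun _ hy ↦ hasDerivAt_poissonDivergence hk.ne' (ne_of_gt hy)) hnum
    (fun _ ↦ one_sub_div_neg) (fun _ ↦ one_sub_div_pos)
    (poissonDivergence_self k) (by simp [hk.ne']) hp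
  have heq (x : ℝ) : poissonSLLSlope k x =
      √(-(-((1 - k / x) ^ 2 / 2) / poissonDivergence k x)) := by
    rw [poissonSLLSlope, ← Real.sqrt_sq_eq_abs, ← Real.sqrt_div (sq_nonneg _)]
    congr 1
    ring
  intro x hx y hy hxy
  rw [heq, heq]
  exact Real.sqrt_le_sqrt (neg_le_neg (hratio hx hy hxy))

lemma monotoneOn_mul_poissonSLLSlope (hk : 0 < k) :
    MonotoneOn (fun x ↦ x * poissonSLLSlope k x) (Ioi 0 \ {k}) := by
  have hnum : ∀ x ∈ Ioi 0, HasDerivAt (fun x ↦ (x - k) ^ 2 / 2) (x * (1 - k / x)) x := by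
    intro x hx
    refine ((((hasDerivAt_id' x).sub_const k).fun_pow 2).div_const 2).congr_deriv ?_
    rw [mul_sub, mul_div_cancel₀ _ (ne_of_gt hx)]
    ring
  have hratio := monotoneOn_div_of_hasDerivAt_mul (convex_Ioi 0) hk
    (fun _ hy ↦ hasDerivAt_poissonDivergence hk.ne' (ne_of_gt hy)) hnum
    (fun _ ↦ one_sub_div_neg) (fun _ ↦ one_sub_div_pos)
    (poissonDivergence_self k) (by simp) monotoneOn_id
  have heq {x : ℝ} (hx : 0 < x) : x * poissonSLLSlope k x =
      √((x - k) ^ 2 / 2 / poissonDivergence k x) := by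
    rw [div_div, Real.sqrt_div (sq_nonneg _), Real.sqrt_sq_eq_abs, poissonSLLSlope,
      mul_div_assoc', ← abs_of_pos hx, ← abs_mul, abs_of_pos hx, mul_sub, mul_div_cancel₀ _ hx.ne',
      mul_one]
  intro x hx y hy hxy
  dsimp only
  rw [heq hx.1, heq hy.1]
  exact Real.sqrt_le_sqrt (hratio hx hy hxy)

end PoissonDivergence

section SignedLogLikelihood

variable {k : ℕ} {x : ℝ}

lemma poissonSLL_of_lt (hkx : k < x) : poissonSLL x k = -√(2 * poissonDivergence k x) :=
  if_pos hkx

lemma poissonSLL_of_le (hxk : x ≤ k) : poissonSLL x k = √(2 * poissonDivergence k x) :=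
  if_neg hxk.not_gt

lemma poissonSLL_sq (hk : k ≠ 0) (hx : 0 < x) :
    poissonSLL x k ^ 2 = 2 * poissonDivergence k x := by
  have hnonneg : 0 ≤ 2 * poissonDivergence k x :=
    mul_nonneg zero_le_two (poissonDivergence_nonneg (by positivity) hx)
  rcases le_or_gt x k with h | h
  · rw [poissonSLL_of_le h, Real.sq_sqrt hnonneg]
  · rw [poissonSLL_of_lt h, neg_sq, Real.sq_sqrt hnonneg]

lemma poissonSLL_eq_sub (x : ℝ) (k : ℕ) : poissonSLL x k =
    √(2 * poissonDivergence k (min x k)) - √(2 * poissonDivergence k (max x k)) := by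
  rcases le_or_gt x k with h | h
  · simp [poissonSLL_of_le h, h]
  · simp [poissonSLL_of_lt h, h.le]

lemma continuousOn_poissonSLL (hk : k ≠ 0) : ContinuousOn (poissonSLL · k) (Ioi 0) := by
  have hk' : (0 : ℝ) < k := by positivity
  have hroot : ContinuousOn (fun x ↦ √(2 * poissonDivergence k x)) (Ioi 0) := fun x hx ↦
    ((hasDerivAt_poissonDivergence hk'.ne' (ne_of_gt hx)).continuousAt.const_mul
      2).sqrt.continuousWithinAt
  simp only [poissonSLL_eq_sub]
  exact (hroot.comp (by fun_prop) fun x hx ↦ lt_min hx hk').sub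
    (hroot.comp (by fun_prop) fun x hx ↦ lt_max_of_lt_left (mem_Ioi.1 hx))

lemma hasDerivAt_poissonSLL (hk : k ≠ 0) (hx : 0 < x) (hxk : x ≠ k) :
    HasDerivAt (poissonSLL · k) (-poissonSLLSlope k x) x := by
  have hk' : (0 : ℝ) < k := by positivity
  have hroot : HasDerivAt (fun y ↦ √(2 * poissonDivergence k y))
      ((1 - k / x) / √(2 * poissonDivergence k x)) x := by
    refine (((hasDerivAt_poissonDivergence hk'.ne' hx.ne').const_mul 2).sqrt
      (mul_pos two_pos (poissonDivergence_pos hk' hx hxk)).ne').congr_deriv ?_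
    rw [mul_div_mul_left _ _ two_ne_zero]
  rcases lt_or_gt_of_ne hxk with h | h
  · refine (hroot.congr_of_eventuallyEq ?_).congr_deriv ?_
    · filter_upwards [Iio_mem_nhds h] with y hy using poissonSLL_of_le (le_of_lt hy)
    · rw [poissonSLLSlope, abs_of_neg (one_sub_div_neg hx h), neg_div, neg_neg]
  · refine (hroot.neg.congr_of_eventuallyEq ?_).congr_deriv ?_
    · filter_upwards [Ioi_mem_nhds h] with y hy using poissonSLL_of_lt hy
    · rw [poissonSLLSlope, abs_of_pos (one_sub_div_pos hx h)]

lemma tendsto_poissonSLL_nhdsGT_zero (hk : k ≠ 0) :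
    Tendsto (poissonSLL · k) (𝓝[>] 0) atTop := by
  have hk' : (0 : ℝ) < k := by positivity
  refine (Real.tendsto_sqrt_atTop.comp
    ((tendsto_poissonDivergence_nhdsGT_zero hk').const_mul_atTop two_pos)).congr' ?_
  filter_upwards [Ioo_mem_nhdsGT hk'] with x hx using (poissonSLL_of_le hx.2.le).symm

lemma tendsto_poissonSLL_atTop (k : ℕ) : Tendsto (poissonSLL · k) atTop atBot := by
  refine (tendsto_neg_atTop_atBot.comp (Real.tendsto_sqrt_atTop.comp
    ((tendsto_poissonDivergence_atTop k).const_mul_atTop two_pos))).congr' ?_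
  filter_upwards [eventually_gt_atTop (k : ℝ)] with x hx using (poissonSLL_of_lt hx).symm

end SignedLogLikelihood

section Comparison

variable {k : ℕ} {x : ℝ}

lemma continuousOn_stdGaussianCDF_poissonSLL (hk : k ≠ 0) :
    ContinuousOn (fun x ↦ stdGaussianCDF (poissonSLL x k)) (Ioi 0) :=
  fun x hx ↦ (hasDerivAt_stdGaussianCDF _).continuousAt.comp_continuousWithinAt
    (continuousOn_poissonSLL hk x hx)

lemma tendsto_stdGaussianCDF_poissonSLL_nhdsGT_zero (hk : k ≠ 0) :
    Tendsto (fun x ↦ stdGaussianCDF (poissonSLL x k)) (𝓝[>] 0) (𝓝 1) :=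
  tendsto_stdGaussianCDF_atTop.comp (tendsto_poissonSLL_nhdsGT_zero hk)

lemma tendsto_stdGaussianCDF_poissonSLL_atTop (k : ℕ) :
    Tendsto (fun x ↦ stdGaussianCDF (poissonSLL x k)) atTop (𝓝 0) :=
  tendsto_stdGaussianCDF_atBot.comp (tendsto_poissonSLL_atTop k)

/-- The constant relating the standard Gaussian density at `poissonSLL x k` to `x ^ k * exp (-x)`;
it is Stirling's approximation to `√k / k!`. -/
noncomputable def gaussianPoissonConst (k : ℕ) : ℝ := (Real.exp 1 / k) ^ k / √(2 * Real.pi)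

lemma gaussianPoissonConst_nonneg (k : ℕ) : 0 ≤ gaussianPoissonConst k := by
  unfold gaussianPoissonConst
  positivity

lemma hasDerivAt_stdGaussianCDF_poissonSLL (hk : k ≠ 0) (hx : 0 < x) (hxk : x ≠ k) :
    HasDerivAt (fun x ↦ stdGaussianCDF (poissonSLL x k))
      (-(x ^ k * Real.exp (-x) * (gaussianPoissonConst k * poissonSLLSlope k x))) x := by
  refine ((hasDerivAt_stdGaussianCDF (poissonSLL x k)).comp x
    (hasDerivAt_poissonSLL hk hx hxk)).congr_deriv ?_
  rw [poissonSLL_sq hk hx, neg_div, mul_div_cancel_left₀ _ two_ne_zero,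
    exp_neg_poissonDivergence hk hx, gaussianPoissonConst]
  ring

theorem poissonProbLT_le_stdGaussianCDF (hk : k ≠ 0) (hx : 0 < x) :
    poissonProbLT k x ≤ stdGaussianCDF (poissonSLL x k) := by
  obtain ⟨n, rfl⟩ : ∃ n, k = n + 1 := Nat.exists_eq_succ_of_ne_zero hk
  rw [← sub_nonneg]
  refine nonneg_of_hasDerivAt_mul_sub_of_monotoneOn
    (f := fun x ↦ stdGaussianCDF (poissonSLL x (n + 1)) - poissonProbLT (n + 1) x)
    (w := fun x ↦ x ^ n * Real.exp (-x)) (k := (n + 1 : ℕ)) (c := 1 / n.factorial)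
    (q := fun x ↦ gaussianPoissonConst (n + 1) * (x * poissonSLLSlope (n + 1 : ℕ) x))
    ((continuousOn_stdGaussianCDF_poissonSLL hk).sub (continuous_poissonProbLT _).continuousOn)
    (fun y hy ↦ ?_) (fun y hy ↦ ?_) ?_ ?_ ?_ x hx
  · exact ((hasDerivAt_stdGaussianCDF_poissonSLL hk hy.1 hy.2).sub
      (hasDerivAt_poissonProbLT_succ n y)).congr_deriv (by ring)
  · exact mul_nonneg (pow_nonneg (le_of_lt hy) n) (Real.exp_pos _).le
  · exact fun y hy z hz hyz ↦ mul_le_mul_of_nonneg_left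
      (monotoneOn_mul_poissonSLLSlope (by positivity) hy hz hyz) (gaussianPoissonConst_nonneg _)
  · simpa using (tendsto_stdGaussianCDF_poissonSLL_nhdsGT_zero hk).sub
      (tendsto_poissonProbLT_succ_nhdsGT_zero n)
  · simpa using (tendsto_stdGaussianCDF_poissonSLL_atTop (n + 1)).sub
      (tendsto_poissonProbLT_atTop (n + 1))

theorem stdGaussianCDF_le_poissonProbLT_succ (hk : k ≠ 0) (hx : 0 < x) :
    stdGaussianCDF (poissonSLL x k) ≤ poissonProbLT (k + 1) x := by
  rw [← sub_nonneg]
  refine nonneg_of_hasDerivAt_mul_sub_of_monotoneOn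
    (f := fun x ↦ poissonProbLT (k + 1) x - stdGaussianCDF (poissonSLL x k))
    (w := fun x ↦ x ^ k * Real.exp (-x)) (k := k) (c := -(1 / k.factorial))
    (q := fun x ↦ -(gaussianPoissonConst k * poissonSLLSlope k x))
    ((continuous_poissonProbLT _).continuousOn.sub (continuousOn_stdGaussianCDF_poissonSLL hk))
    (fun y hy ↦ ?_) (fun y hy ↦ ?_) ?_ ?_ ?_ x hx
  · exact ((hasDerivAt_poissonProbLT_succ k y).sub
      (hasDerivAt_stdGaussianCDF_poissonSLL hk hy.1 hy.2)).congr_deriv (by ring)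
  · exact mul_nonneg (pow_nonneg (le_of_lt hy) k) (Real.exp_pos _).le
  · exact fun y hy z hz hyz ↦ neg_le_neg (mul_le_mul_of_nonneg_left
      (antitoneOn_poissonSLLSlope (by positivity) hy hz hyz) (gaussianPoissonConst_nonneg k))
  · simpa using (tendsto_poissonProbLT_succ_nhdsGT_zero k).sub
      (tendsto_stdGaussianCDF_poissonSLL_nhdsGT_zero hk)
  · simpa using (tendsto_poissonProbLT_atTop (k + 1)).sub
      (tendsto_stdGaussianCDF_poissonSLL_atTop k)

lemma stdGaussianCDF_poissonSLL_zero_le_exp_neg (hx : 0 < x) :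
    stdGaussianCDF (poissonSLL x 0) ≤ Real.exp (-x) := by
  have hsll : poissonSLL x 0 = -√(2 * x) := by simp [poissonSLL, hx]
  have hexponent : -poissonSLL x 0 ^ 2 / 2 = -x := by
    rw [hsll, neg_sq, Real.sq_sqrt (by positivity)]
    ring
  rw [← hexponent]
  exact stdGaussianCDF_le_exp_neg_sq_div_two (hsll.trans_le (neg_nonpos.2 (Real.sqrt_nonneg _)))

end Comparison

theorem poisson_intersection (lam : ℝ) (hlam : 0 < lam) (k : ℕ) :
    (∑ m ∈ Finset.range k, lam ^ m * Real.exp (-lam) / m.factorial) ≤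
        stdGaussianCDF (poissonSLL lam k) ∧
      stdGaussianCDF (poissonSLL lam k) ≤
        ∑ m ∈ Finset.range (k + 1), lam ^ m * Real.exp (-lam) / m.factorial := by
  rcases eq_or_ne k 0 with rfl | hk
  · constructor
    · simpa using stdGaussianCDF_nonneg _
    · simpa using stdGaussianCDF_poissonSLL_zero_le_exp_neg hlam
  · exact ⟨poissonProbLT_le_stdGaussianCDF hk hlam, stdGaussianCDF_le_poissonProbLT_succ hk hlam⟩
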